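/- Let Ω be a bounded domain in ℂⁿ, n ≥ 2, and let Δ be the open unit disk in ℂ. Let φ : Δ → Ω be a proper holomorphic map (preimages of compact subsets of Ω are compact) which, for some δ > 0, is Lipschitz continuous on Δ ∩ {|ζ−1| < δ} and extends continuously to ζ = 1 with φ(1) = p ∈ ∂Ω. Suppose there exist a neighborhood U of p in ℂⁿ and a C¹ function ρ : U → ℝ with dρ ≠ 0 on U, Ω ∩ U = {z ∈ U : ρ(z) < 0} and ∂Ω ∩ U = {z ∈ U : ρ(z) = 0}, such that ρ ∘ φ is subharmonic on the open set φ⁻¹(U) ⊆ Δ. If F : Ω → Ω is a holomorphic map with F(φ(ζ)) = φ(ζ) for all ζ ∈ Δ and F(z) = z + o(‖z−p‖²) as z → p within Ω, then F(z) = z for all z ∈ Ω. -/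

import Mathlib

open Complex Topology Filter Metric Set Function

noncomputable section

/-- `ℂⁿ` as a normed space. -/
abbrev En (n : ℕ) : Type := EuclideanSpace ℂ (Fin n)

/-- A domain: a nonempty open connected set. -/
def IsDomain' {n : ℕ} (Ω : Set (En n)) : Prop :=
  IsOpen Ω ∧ IsConnected Ω

/-- The Levi form of `ρ` at `q` in direction `ξ`:
`(1/4)(H_q(ξ,ξ) + H_q(iξ,iξ))` with `H_q` the second real Fréchet derivative. -/
def LeviForm {n : ℕ} (ρ : En n → ℝ) (q ξ : En n) : ℝ :=
  (1 / 4) * (iteratedFDeriv ℝ 2 ρ q ![ξ, ξ] + iteratedFDeriv ℝ 2 ρ q ![I • ξ, I • ξ])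

/-- `ξ` lies in the complex tangent space of `{ρ = 0}` at `q`. -/
def InCplxTangent {n : ℕ} (ρ : En n → ℝ) (q ξ : En n) : Prop :=
  fderiv ℝ ρ q ξ = 0 ∧ fderiv ℝ ρ q (I • ξ) = 0

/-- `ρ` is a `C^m` defining function for `Ω`. -/
def IsDefiningFunction {n : ℕ} (Ω : Set (En n)) (m : ℕ∞) (ρ : En n → ℝ) : Prop :=
  ContDiff ℝ m ρ ∧ Ω = {z | ρ z < 0} ∧ frontier Ω = {z | ρ z = 0} ∧
    ∀ q ∈ frontier Ω, fderiv ℝ ρ q ≠ 0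

/-- `q` is a strongly pseudoconvex point with respect to `ρ`. -/
def StronglyPcxAt {n : ℕ} (ρ : En n → ℝ) (q : En n) : Prop :=
  ∀ ξ : En n, ξ ≠ 0 → InCplxTangent ρ q ξ → 0 < LeviForm ρ q ξ

/-- `Ω` is pseudoconvex with `C^∞` boundary, witnessed by the defining function `ρ`. -/
def IsPcxCinfBoundary {n : ℕ} (Ω : Set (En n)) (ρ : En n → ℝ) : Prop :=
  IsDefiningFunction Ω ⊤ ρ ∧
    ∀ q ∈ frontier Ω, ∀ ξ : En n, InCplxTangent ρ q ξ → 0 ≤ LeviForm ρ q ξ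

/-- `F z = z + o(‖z - p‖^k)` as `z → p` within `Ω`. -/
def LittleOh {n : ℕ} (Ω : Set (En n)) (F : En n → En n) (p : En n) (k : ℕ) : Prop :=
  Tendsto (fun z => ‖F z - z‖ / ‖z - p‖ ^ k) (𝓝[Ω] p) (𝓝 0)

/-- `F` is an automorphism of `Ω`: a holomorphic bijection with holomorphic inverse. -/
def IsAutomorphismOf {n : ℕ} (F : En n → En n) (Ω : Set (En n)) : Prop :=
  DifferentiableOn ℂ F Ω ∧ MapsTo F Ω Ω ∧
    ∃ G : En n → En n, DifferentiableOn ℂ G Ω ∧ MapsTo G Ω Ω ∧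
      (∀ z ∈ Ω, G (F z) = z) ∧ (∀ z ∈ Ω, F (G z) = z)

/-!
Hopf's lemma, applied to the nonpositive subharmonic function `ρ ∘ φ`, shows that `φ r` stays at
distance at least a multiple of `1 - r` from the complement of `Ω`; hence by the Cauchy estimates
`F'(φ r) = 1 + o(1 - r)` as `r → 1`. Each `F'(φ ζ)` is power-bounded, being the derivative of a
self-map of a bounded domain at a fixed point, so its eigenvalues lie in the closed unit disk and
`Re tr (F'(φ ζ) - 1)` is a nonpositive harmonic function of `ζ`. It is `o(1 - r)` at `1`, so by
Hopf's lemma again it vanishes at `0`. Thus all eigenvalues of `F'(φ 0)` are `1`, and a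
power-bounded unipotent operator is the identity. Cartan's uniqueness theorem then gives `F = id`.
-/

section Subharmonic

open InnerProductSpace Real

/-- Continuous subharmonic functions on a set `s ⊆ ℂ`, characterised by the sub-mean value
inequality on the closed disks contained in `s`. The set is arbitrary, so that the definition
also applies to a compact set, where it constrains the interior only. -/
structure IsSubharmonicOn (u : ℂ → ℝ) (s : Set ℂ) : Prop where
  continuousOn : ContinuousOn u s
  le_circleAverage : ∀ a r, 0 < r → closedBall a r ⊆ s → u a ≤ circleAverage u a r

namespace IsSubharmonicOn

variable {u : ℂ → ℝ} {s t : Set ℂ}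

theorem mono (hu : IsSubharmonicOn u s) (hts : t ⊆ s) : IsSubharmonicOn u t :=
  ⟨hu.continuousOn.mono hts, fun a r hr har => hu.le_circleAverage a r hr (har.trans hts)⟩

theorem of_harmonicOnNhd (hu : HarmonicOnNhd u s) : IsSubharmonicOn u s where
  continuousOn := hu.continuousOn
  le_circleAverage a r hr har :=
    (InnerProductSpace.HarmonicOnNhd.circleAverage_eq (hu.mono (by rwa [abs_of_pos hr]))).ge

theorem sub_harmonicOnNhd {h : ℂ → ℝ} (hu : IsSubharmonicOn u s) (hh : HarmonicOnNhd h s) :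
    IsSubharmonicOn (u - h) s where
  continuousOn := hu.continuousOn.sub hh.continuousOn
  le_circleAverage a r hr har := by
    have hsphere : sphere a |r| ⊆ s := by
      rw [abs_of_pos hr]; exact sphere_subset_closedBall.trans har
    have hmean : circleAverage h a r = h a :=
      InnerProductSpace.HarmonicOnNhd.circleAverage_eq (hh.mono (by rwa [abs_of_pos hr]))
    rw [circleAverage_sub (hu.continuousOn.mono hsphere).circleIntegrable'
      (hh.continuousOn.mono hsphere).circleIntegrable', hmean, Pi.sub_apply]
    exact sub_le_sub_right (hu.le_circleAverage a r hr har) _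

end IsSubharmonicOn

theorem circleAverage_lt_of_forall_le_of_lt {u : ℂ → ℝ} {a : ℂ} {r m : ℝ}
    (hu : ContinuousOn u (sphere a |r|)) (hle : ∀ z ∈ sphere a |r|, u z ≤ m)
    (hlt : u (a + r) < m) : circleAverage u a r < m := by
  have hcont : Continuous fun θ => u (circleMap a r θ) :=
    hu.comp_continuous (continuous_circleMap a r) (circleMap_mem_sphere' a r)
  have hint : ∫ θ in (0 : ℝ)..2 * π, u (circleMap a r θ) < ∫ _ in (0 : ℝ)..2 * π, m :=
    intervalIntegral.integral_lt_integral_of_continuousOn_of_le_of_exists_lt two_pi_pos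
      hcont.continuousOn continuousOn_const
      (fun θ _ => hle _ (circleMap_mem_sphere' a r θ))
      ⟨0, ⟨le_rfl, two_pi_pos.le⟩, by simpa [circleMap] using hlt⟩
  rw [intervalIntegral.integral_const, sub_zero, smul_eq_mul] at hint
  rwa [circleAverage, smul_eq_mul, inv_mul_lt_iff₀ two_pi_pos]

-- At a maximum point of largest real part, the circle average over a small disk is strictly
-- smaller than the maximum.
theorem IsSubharmonicOn.nonpos_of_frontier_nonpos {u : ℂ → ℝ} {K : Set ℂ}
    (hu : IsSubharmonicOn u K) (hK : IsCompact K) (hbd : ∀ z ∈ frontier K, u z ≤ 0) :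
    ∀ z ∈ K, u z ≤ 0 := by
  by_contra! ⟨z, hzK, hz⟩
  obtain ⟨m, hmK, hm⟩ := hK.exists_isMaxOn ⟨z, hzK⟩ hu.continuousOn
  have hmax : IsCompact (K ∩ u ⁻¹' {u m}) :=
    hK.of_isClosed_subset
      (hu.continuousOn.preimage_isClosed_of_isClosed hK.isClosed isClosed_singleton)
      inter_subset_left
  obtain ⟨b, ⟨hbK, hbm : u b = u m⟩, hbre⟩ :=
    hmax.exists_isMaxOn ⟨m, hmK, rfl⟩ Complex.continuous_re.continuousOn
  have hbint : b ∈ interior K := by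
    by_contra hb
    have hub := hbd b ⟨subset_closure hbK, hb⟩
    linarith [show u z ≤ u m from hm hzK]
  obtain ⟨r, hr, hrK⟩ := nhds_basis_closedBall.mem_iff.1 (mem_interior_iff_mem_nhds.1 hbint)
  have hsphere : sphere b |r| ⊆ K := by
    rw [abs_of_pos hr]; exact sphere_subset_closedBall.trans hrK
  have hright : u (b + r) < u m := by
    have hmem : b + r ∈ K := hrK (by simp [abs_of_pos hr])
    refine (hm hmem).lt_of_ne fun h => ?_
    have : (b + r).re ≤ b.re := hbre ⟨hmem, h⟩
    rw [add_re, ofReal_re] at this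
    linarith
  have := circleAverage_lt_of_forall_le_of_lt (hu.continuousOn.mono hsphere)
    (fun x hx => hm (hsphere hx)) hright
  linarith [hu.le_circleAverage b r hr hrK]

theorem harmonicOnNhd_log_dist (a : ℂ) : HarmonicOnNhd (fun z => Real.log (dist z a)) {a}ᶜ :=
  fun z hz => by
    simp only [dist_eq_norm_sub]
    exact AnalyticAt.harmonicAt_log_norm (by fun_prop) (sub_ne_zero.2 hz)

theorem mem_sphere_of_mem_frontier_annulus {X : Type*} [PseudoMetricSpace X] {a z : X} {t R : ℝ}
    (hz : z ∈ frontier (closedBall a R ∩ {x | t ≤ dist x a})) :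
    dist z a = t ∨ dist z a = R := by
  have hclosed : IsClosed (closedBall a R ∩ {x | t ≤ dist x a}) :=
    isClosed_closedBall.inter (isClosed_le continuous_const (by fun_prop))
  obtain ⟨hzR : dist z a ≤ R, hzt : t ≤ dist z a⟩ := hclosed.frontier_subset hz
  by_contra! ⟨hne_t, hne_R⟩
  refine hz.2 (mem_interior.2 ⟨ball a R ∩ {x | t < dist x a}, ?_, ?_,
    hzR.lt_of_ne hne_R, hzt.lt_of_ne' hne_t⟩)
  · exact inter_subset_inter ball_subset_closedBall fun x (hx : t < dist x a) => hx.le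
  · exact isOpen_ball.inter (isOpen_lt continuous_const (by fun_prop))

theorem IsSubharmonicOn.le_log_of_annulus {u : ℂ → ℝ} {a : ℂ} {t R ε : ℝ} (ht : 0 < t)
    (hu : IsSubharmonicOn u (closedBall a R ∩ {x | t ≤ dist x a}))
    (hinner : ∀ z, dist z a = t → u z ≤ ε * (Real.log t - Real.log R))
    (houter : ∀ z, dist z a = R → u z ≤ 0) {z : ℂ} (hzt : t ≤ dist z a) (hzR : dist z a ≤ R) :
    u z ≤ ε * (Real.log (dist z a) - Real.log R) := by
  set K := closedBall a R ∩ {x | t ≤ dist x a}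
  have hK : IsCompact K :=
    (isCompact_closedBall a R).inter_right (isClosed_le continuous_const (by fun_prop))
  have hKa : K ⊆ {a}ᶜ := fun x hx hxa => by
    have : t ≤ dist x a := hx.2
    rw [hxa, dist_self] at this
    linarith
  have hharm : HarmonicOnNhd (fun x => ε * (Real.log (dist x a) - Real.log R)) K :=
    HarmonicOnNhd.const_smul (((harmonicOnNhd_log_dist a).mono hKa).sub (harmonicOnNhd_const _))
  refine sub_nonpos.1 ((hu.sub_harmonicOnNhd hharm).nonpos_of_frontier_nonpos hK ?_ z ⟨hzR, hzt⟩)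
  intro x hx
  rw [Pi.sub_apply, sub_nonpos]
  rcases mem_sphere_of_mem_frontier_annulus hx with h | h
  · rw [h]; exact hinner x h
  · rw [h, sub_self, mul_zero]; exact houter x h

/-- **Hopf's boundary point lemma** on a disk. -/
theorem IsSubharmonicOn.exists_le_neg_mul_of_ball {u : ℂ → ℝ} {a : ℂ} {s : ℝ} (hs : 0 < s)
    (hu : IsSubharmonicOn u (ball a s)) (hle : ∀ z ∈ ball a s, u z ≤ 0) (ha : u a < 0) :
    ∃ c > 0, ∃ t < s, ∀ z, t ≤ dist z a → dist z a < s → u z ≤ -(c * (s - dist z a)) := by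
  have hnear : ∀ᶠ z in 𝓝 a, u z < u a / 2 :=
    (hu.continuousOn.continuousAt (ball_mem_nhds a hs)).eventually (gt_mem_nhds (by linarith))
  obtain ⟨t₀, ht₀, hball⟩ := nhds_basis_closedBall.eventually_iff.1 hnear
  obtain ⟨t, ht, htt₀, hts⟩ : ∃ t, 0 < t ∧ t ≤ t₀ ∧ t < s :=
    ⟨min t₀ (s / 2), by positivity, min_le_left _ _, (min_le_right _ _).trans_lt (by linarith)⟩
  have hlog : 0 < Real.log s - Real.log t := sub_pos.2 (Real.log_lt_log ht hts)
  -- With this `ε` the barrier `ε * Real.log (dist z a / s)` equals `u a / 2` on the inner circle.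
  set ε : ℝ := -(u a / 2) / (Real.log s - Real.log t)
  have hε : 0 < ε := div_pos (by linarith) hlog
  have hinner : ∀ z, dist z a = t → u z ≤ ε * (Real.log t - Real.log s) := fun z hz => by
    have : ε * (Real.log s - Real.log t) = -(u a / 2) := div_mul_cancel₀ _ hlog.ne'
    linarith [hball (mem_closedBall.2 (hz.trans_le htt₀))]
  have hbarrier : ∀ R ∈ Ioo t s, ∀ z, t ≤ dist z a → dist z a ≤ R →
      u z ≤ ε * (Real.log (dist z a) - Real.log R) := fun R hR z hzt hzR => by
    have hRs : closedBall a R ⊆ ball a s := closedBall_subset_ball hR.2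
    refine (hu.mono (inter_subset_left.trans hRs)).le_log_of_annulus ht (fun x hx => ?_)
      (fun x hx => hle x (hRs hx.le)) hzt hzR
    exact (hinner x hx).trans (by gcongr; exacts [ht.trans hR.1, hR.2.le])
  refine ⟨ε / s, by positivity, t, hts, fun z hzt hzs => ?_⟩
  have hz0 : 0 < dist z a := ht.trans_le hzt
  have hlim : Tendsto (fun R => ε * (Real.log (dist z a) - Real.log R)) (𝓝[<] s)
      (𝓝 (ε * (Real.log (dist z a) - Real.log s))) :=
    (((Real.continuousAt_log hs.ne').tendsto.mono_left nhdsWithin_le_nhds).const_sub _).const_mul _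
  calc u z ≤ ε * (Real.log (dist z a) - Real.log s) := by
        refine ge_of_tendsto hlim ?_
        filter_upwards [Ioo_mem_nhdsLT hzs] with R hR
        exact hbarrier R ⟨hzt.trans_lt hR.1, hR.2⟩ z hzt hR.1.le
    _ ≤ ε * (dist z a / s - 1) := by
        rw [← Real.log_div hz0.ne' hs.ne']
        gcongr
        exact Real.log_le_sub_one_of_pos (by positivity)
    _ = -(ε / s * (s - dist z a)) := by field_simp; ring

theorem IsSubharmonicOn.exists_eventually_le_neg_mul {u : ℂ → ℝ} {s : ℝ} (hs : 0 < s)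
    (hu : IsSubharmonicOn u (ball ((1 - s : ℝ) : ℂ) s))
    (hle : ∀ z ∈ ball ((1 - s : ℝ) : ℂ) s, u z ≤ 0) (hneg : u (1 - s : ℝ) < 0) :
    ∃ c > 0, ∀ᶠ r : ℝ in 𝓝[<] 1, u r ≤ -(c * (1 - r)) := by
  obtain ⟨c, hc, t, hts, hopf⟩ := hu.exists_le_neg_mul_of_ball hs hle hneg
  refine ⟨c, hc, ?_⟩
  filter_upwards [Ioo_mem_nhdsLT (show max (1 - s) (1 - s + t) < 1 from
    max_lt (by linarith) (by linarith))] with r ⟨hr, hr1⟩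
  obtain ⟨hrs, hrt⟩ := max_lt_iff.1 hr
  have hdist : dist (r : ℂ) (1 - s : ℝ) = r - (1 - s) := by
    rw [Complex.isometry_ofReal.dist_eq, Real.dist_eq, abs_of_pos (by linarith)]
  have := hopf r (by rw [hdist]; linarith) (by rw [hdist]; linarith)
  rwa [hdist, show s - (r - (1 - s)) = 1 - r by ring] at this

theorem IsSubharmonicOn.eq_zero_of_isLittleO {u : ℂ → ℝ} (hu : IsSubharmonicOn u (ball 0 1))
    (hle : ∀ z ∈ ball (0 : ℂ) 1, u z ≤ 0)
    (ho : (fun r : ℝ => u r) =o[𝓝[<] 1] fun r => 1 - r) : u 0 = 0 := by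
  refine (hle 0 (mem_ball_self one_pos)).antisymm (le_of_not_gt fun hneg => ?_)
  obtain ⟨c, hc, hopf⟩ := IsSubharmonicOn.exists_eventually_le_neg_mul (u := u) one_pos
    (by simpa using hu) (by simpa using hle) (by simpa using hneg)
  obtain ⟨r, hr, hro, hr1⟩ :=
    (hopf.and ((ho.def (half_pos hc)).and self_mem_nhdsWithin)).exists
  have hr1 : 0 < 1 - r := sub_pos.2 hr1
  rw [Real.norm_eq_abs, Real.norm_of_nonneg hr1.le] at hro
  linarith [neg_le_abs (u r), mul_pos hc hr1]

end Subharmonic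

section Holomorphic

open Asymptotics

variable {E E' : Type*} [NormedAddCommGroup E] [NormedSpace ℂ E] [NormedAddCommGroup E']
  [NormedSpace ℂ E'] {f : E → E'} {Ω : Set E}

theorem norm_fderiv_le_of_forall_mem_ball_norm_le {c : E} {R M : ℝ}
    (hf : DifferentiableOn ℂ f (ball c R)) (hM : ∀ z ∈ ball c R, ‖f z‖ ≤ M) (hR : 0 < R) :
    ‖fderiv ℂ f c‖ ≤ 2 * M / R := by
  refine norm_fderiv_le_div_of_mapsTo_ball hf (fun z hz => ?_) hR
  rw [mem_closedBall, dist_eq_norm_sub]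
  linarith [norm_sub_le (f z) (f c), hM z hz, hM c (mem_ball_self hR)]

theorem isLittleO_fderiv_of_isLittleO_pow {ι : Type*} {l : Filter ι} {γ : ι → E} {t : ι → ℝ}
    {p : E} {κ : ℝ} {k : ℕ} (hf : DifferentiableOn ℂ f Ω)
    (ho : f =o[𝓝[Ω] p] fun z => ‖z - p‖ ^ (k + 1)) (hκ : 0 < κ) (htpos : ∀ᶠ x in l, 0 < t x)
    (ht : Tendsto t l (𝓝 0)) (hball : ∀ᶠ x in l, ball (γ x) (κ * t x) ⊆ Ω)
    (hγ : (fun x => γ x - p) =O[l] t) :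
    (fun x => fderiv ℂ f (γ x)) =o[l] fun x => t x ^ k := by
  obtain ⟨C, hC, hγC⟩ := hγ.exists_pos
  refine isLittleO_iff.2 fun ε hε => ?_
  set η : ℝ := ε * κ / (2 * (C + κ) ^ (k + 1)) with hη
  obtain ⟨τ, hτ, hfτ⟩ := mem_nhdsWithin_iff.1 (ho.def (show 0 < η by positivity))
  have hsmall : ∀ᶠ x in l, (C + κ) * t x < τ :=
    (ht.const_mul (C + κ)).eventually (gt_mem_nhds (by simpa using hτ))
  filter_upwards [hγC.bound, htpos, hball, hsmall] with x hxp hx hxball hxτ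
  have hfM : ∀ z ∈ ball (γ x) (κ * t x), ‖f z‖ ≤ η * ((C + κ) * t x) ^ (k + 1) := fun z hz => by
    have hzp : ‖z - p‖ ≤ (C + κ) * t x := by
      rw [← dist_eq_norm_sub, Real.norm_of_nonneg hx.le] at hxp
      rw [← dist_eq_norm_sub]
      linarith [dist_triangle z (γ x) p, mem_ball.1 hz]
    have hfz : ‖f z‖ ≤ η * ‖‖z - p‖ ^ (k + 1)‖ :=
      hfτ ⟨by rw [mem_ball, dist_eq_norm_sub]; exact hzp.trans_lt hxτ, hxball hz⟩
    rw [norm_pow, norm_norm] at hfz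
    exact hfz.trans (by gcongr)
  calc ‖fderiv ℂ f (γ x)‖
      ≤ 2 * (η * ((C + κ) * t x) ^ (k + 1)) / (κ * t x) :=
        norm_fderiv_le_of_forall_mem_ball_norm_le (hf.mono hxball) hfM (by positivity)
    _ = ε * t x ^ k := by rw [hη, mul_pow]; field_simp; ring
    _ = ε * ‖t x ^ k‖ := by rw [norm_pow, Real.norm_of_nonneg hx.le]

-- Mathlib has the analyticity of holomorphic maps only for functions of one complex variable.
theorem continuousOn_fderiv_of_differentiableOn (hΩ : IsOpen Ω) (hf : DifferentiableOn ℂ f Ω) :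
    ContinuousOn (fderiv ℂ f) Ω := by
  intro z hz
  have hfz : HasFDerivAt f (fderiv ℂ f z) z := (hf.differentiableAt (hΩ.mem_nhds hz)).hasFDerivAt
  set g : E → E' := fun y => f y - f z - fderiv ℂ f z (y - z)
  have hg : ∀ y ∈ Ω, HasFDerivAt g (fderiv ℂ f y - fderiv ℂ f z) y := fun y hy =>
    ((hf.differentiableAt (hΩ.mem_nhds hy)).hasFDerivAt.sub_const _).sub
      ((fderiv ℂ f z).hasFDerivAt.comp y ((hasFDerivAt_id y).sub_const z))
  obtain ⟨r, hr, hrΩ⟩ := isOpen_iff.1 hΩ z hz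
  have hball : ∀ᶠ y in 𝓝[≠] z, ball y (1 * ‖y - z‖) ⊆ Ω := by
    filter_upwards [mem_nhdsWithin_of_mem_nhds (ball_mem_nhds z (half_pos hr))] with y hy
    rw [one_mul, ← dist_eq_norm_sub]
    exact (ball_subset_ball' (by linarith [mem_ball.1 hy])).trans hrΩ
  have hlim : Tendsto (fun y => ‖y - z‖) (𝓝[≠] z) (𝓝 0) :=
    (tendsto_norm_sub_self z).mono_left nhdsWithin_le_nhds
  have hgo : (fderiv ℂ g) =o[𝓝[≠] z] fun y => ‖y - z‖ ^ 0 := by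
    refine isLittleO_fderiv_of_isLittleO_pow (γ := id) (p := z)
      (fun y hy => (hg y hy).differentiableAt.differentiableWithinAt) ?_ one_pos
      (by filter_upwards [self_mem_nhdsWithin] with y hy using norm_sub_pos_iff.2 hy) hlim hball
      (isBigO_refl (fun y => y - z) _).norm_right
    simpa only [zero_add, pow_one] using (hfz.isLittleO.mono nhdsWithin_le_nhds).norm_right
  simp only [pow_zero, isLittleO_one_iff] at hgo
  refine (continuousAt_iff_punctured_nhds.2 ?_).continuousWithinAt
  refine tendsto_sub_nhds_zero_iff.1 (hgo.congr' ?_)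
  filter_upwards [mem_nhdsWithin_of_mem_nhds (hΩ.mem_nhds hz)] with y hy using (hg y hy).fderiv

theorem hasStrictFDerivAt_fderiv_of_differentiableOn (hΩ : IsOpen Ω)
    (hf : DifferentiableOn ℂ f Ω) {z : E} (hz : z ∈ Ω) :
    HasStrictFDerivAt f (fderiv ℂ f z) z := by
  refine hasStrictFDerivAt_of_hasFDerivAt_of_continuousAt ?_
    ((continuousOn_fderiv_of_differentiableOn hΩ hf).continuousAt (hΩ.mem_nhds hz))
  filter_upwards [hΩ.mem_nhds hz] with y hy
  exact (hf.differentiableAt (hΩ.mem_nhds hy)).hasFDerivAt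

theorem tendsto_inv_smul_sub_of_hasStrictFDerivAt {𝕜 G H : Type*} [NontriviallyNormedField 𝕜]
    [NormedAddCommGroup G] [NormedSpace 𝕜 G] [NormedAddCommGroup H] [NormedSpace 𝕜 H] {g : G → H}
    {g' : G →L[𝕜] H} {z : G} (hg : HasStrictFDerivAt g g' z) (v : G) :
    Tendsto (fun q : 𝕜 × G => q.1⁻¹ • (g (q.2 + q.1 • v) - g q.2)) (𝓝[≠] 0 ×ˢ 𝓝 z)
      (𝓝 (g' v)) := by
  have hpair : Tendsto (fun q : 𝕜 × G => (q.2 + q.1 • v, q.2)) (𝓝[≠] 0 ×ˢ 𝓝 z) (𝓝 (z, z)) := by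
    have hcont : Continuous fun q : 𝕜 × G => (q.2 + q.1 • v, q.2) := by fun_prop
    have hle : 𝓝[≠] (0 : 𝕜) ×ˢ 𝓝 z ≤ 𝓝 (0, z) := by
      rw [nhds_prod_eq]; exact prod_mono_left _ nhdsWithin_le_nhds
    exact (hcont.tendsto' (0, z) (z, z) (by simp)).mono_left hle
  have hO : (fun q : 𝕜 × G => q.2 + q.1 • v - q.2) =O[𝓝[≠] 0 ×ˢ 𝓝 z] Prod.fst :=
    .of_bound ‖v‖ (.of_forall fun q => by rw [add_sub_cancel_left, norm_smul, mul_comm])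
  have hlim := ((hg.isLittleO.comp_tendsto hpair).trans_isBigO hO).tendsto_inv_smul_nhds_zero
  refine tendsto_sub_nhds_zero_iff.1 (hlim.congr' ?_)
  filter_upwards [prod_mem_prod self_mem_nhdsWithin univ_mem] with q ⟨(hq : q.1 ≠ 0), _⟩
  simp only [comp_apply, add_sub_cancel_left, map_smul, smul_sub, inv_smul_smul₀ hq]

variable [CompleteSpace E'] {φ : ℂ → E} {D : Set ℂ}

-- The difference quotients of `f` in direction `v` along `φ` are holomorphic in `ζ`, and converge
-- locally uniformly because `f` is strictly differentiable with continuous derivative.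
theorem differentiableOn_fderiv_comp_apply (hΩ : IsOpen Ω) (hf : DifferentiableOn ℂ f Ω)
    (hD : IsOpen D) (hφ : DifferentiableOn ℂ φ D) (hφΩ : MapsTo φ D Ω) (v : E) :
    DifferentiableOn ℂ (fun ζ => fderiv ℂ f (φ ζ) v) D := by
  intro ζ₀ hζ₀
  obtain ⟨r, hr, hrΩ⟩ := isOpen_iff.1 hΩ _ (hφΩ hζ₀)
  set V : Set ℂ := D ∩ φ ⁻¹' ball (φ ζ₀) (r / 2)
  have hV : IsOpen V := hφ.continuousOn.isOpen_inter_preimage hD isOpen_ball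
  have hφV : DifferentiableOn ℂ φ V := hφ.mono inter_subset_left
  have hlim : TendstoLocallyUniformlyOn (fun (t : ℂ) ζ => t⁻¹ • (f (φ ζ + t • v) - f (φ ζ)))
      (fun ζ => fderiv ℂ f (φ ζ) v) (𝓝[≠] 0) V := by
    refine tendstoLocallyUniformlyOn_iff_forall_tendsto.2 fun ζ hζ => ?_
    have hφζ : Tendsto φ (𝓝[V] ζ) (𝓝 (φ ζ)) := hφV.continuousOn ζ hζ
    have hder : Tendsto (fun x => fderiv ℂ f x v) (𝓝 (φ ζ)) (𝓝 (fderiv ℂ f (φ ζ) v)) :=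
      ((continuousOn_fderiv_of_differentiableOn hΩ hf).continuousAt
        (hΩ.mem_nhds (hφΩ hζ.1))).clm_apply continuousAt_const
    have hquot := (tendsto_inv_smul_sub_of_hasStrictFDerivAt
      (hasStrictFDerivAt_fderiv_of_differentiableOn hΩ hf (hφΩ hζ.1)) v).comp
      (tendsto_fst.prodMk (hφζ.comp tendsto_snd))
    exact ((hder.comp (hφζ.comp tendsto_snd)).prodMk_nhds hquot).mono_right (nhds_le_uniformity _)
  have hdiff : ∀ᶠ t : ℂ in 𝓝[≠] 0,
      DifferentiableOn ℂ (fun ζ => t⁻¹ • (f (φ ζ + t • v) - f (φ ζ))) V := by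
    have htv : Tendsto (fun t : ℂ => ‖t • v‖) (𝓝[≠] 0) (𝓝 0) :=
      (Continuous.tendsto' (by fun_prop) 0 0 (by simp)).mono_left nhdsWithin_le_nhds
    filter_upwards [htv.eventually (gt_mem_nhds (half_pos hr))] with t ht
    refine ((hf.comp (hφV.add_const _) fun ζ hζ => hrΩ ?_).sub
      (hf.comp hφV fun ζ hζ => hφΩ hζ.1)).const_smul _
    have hζt : dist (φ ζ + t • v) (φ ζ) < r / 2 := by
      rwa [dist_eq_norm_sub, add_sub_cancel_left]
    have hζζ₀ : dist (φ ζ) (φ ζ₀) < r / 2 := hζ.2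
    exact (dist_triangle _ (φ ζ) _).trans_lt (by linarith)
  exact ((hlim.differentiableOn hdiff hV).differentiableAt
    (hV.mem_nhds ⟨hζ₀, mem_ball_self (half_pos hr)⟩)).differentiableWithinAt

theorem differentiableOn_fderiv_comp [FiniteDimensional ℂ E] (hΩ : IsOpen Ω)
    (hf : DifferentiableOn ℂ f Ω) (hD : IsOpen D) (hφ : DifferentiableOn ℂ φ D)
    (hφΩ : MapsTo φ D Ω) : DifferentiableOn ℂ (fun ζ => fderiv ℂ f (φ ζ)) D :=
  (contDiffOn_clm_apply.2 fun v =>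
    (differentiableOn_fderiv_comp_apply hΩ hf hD hφ hφΩ v).contDiffOn (n := 1) hD).differentiableOn
    one_ne_zero

end Holomorphic

section PowerBounded

/-- An element of a normed ring is *power-bounded* if its powers are uniformly bounded in norm. -/
def IsPowerBounded {R : Type*} [NormedRing R] (a : R) : Prop :=
  ∃ C : ℝ, ∀ k : ℕ, ‖a ^ k‖ ≤ C

namespace IsPowerBounded

-- If `N = a - 1` satisfies `N ^ (m + 2) = 0`, then `a ^ k * N ^ m = N ^ m + k • N ^ (m + 1)`, which
-- is bounded in `k` only if `N ^ (m + 1) = 0`.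
theorem sub_one_pow_succ_eq_zero {R : Type*} [NormedRing R] [NormedSpace ℝ R] {a : R}
    (ha : IsPowerBounded a) {m : ℕ} (hm : (a - 1) ^ (m + 2) = 0) : (a - 1) ^ (m + 1) = 0 := by
  obtain ⟨C, hC⟩ := ha
  set N := a - 1 with hN
  have hpow : ∀ k : ℕ, a ^ k * N ^ m = N ^ m + k • N ^ (m + 1) := fun k => by
    induction k with
    | zero => simp
    | succ k ih =>
      have ha1 : ∀ j, a * N ^ j = N ^ j + N ^ (j + 1) := fun j => by
        rw [pow_succ', hN]; noncomm_ring
      rw [pow_succ', mul_assoc, ih, mul_add, mul_smul_comm, ha1, ha1, hm, add_zero, succ_nsmul']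
      abel
  have hbound : ∀ k : ℕ, k * ‖N ^ (m + 1)‖ ≤ (C + 1) * ‖N ^ m‖ := fun k => by
    calc k * ‖N ^ (m + 1)‖ = ‖a ^ k * N ^ m - N ^ m‖ := by
          rw [hpow, add_sub_cancel_left, RCLike.norm_nsmul ℝ, nsmul_eq_mul]
      _ ≤ ‖a ^ k‖ * ‖N ^ m‖ + ‖N ^ m‖ := (norm_sub_le _ _).trans (by gcongr; exact norm_mul_le _ _)
      _ ≤ (C + 1) * ‖N ^ m‖ := by rw [add_mul, one_mul]; gcongr; exact hC k
  by_contra hne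
  obtain ⟨k, hk⟩ := exists_nat_gt ((C + 1) * ‖N ^ m‖ / ‖N ^ (m + 1)‖)
  exact (hbound k).not_gt ((div_lt_iff₀ (norm_pos_iff.2 hne)).1 hk)

theorem eq_one_of_isNilpotent_sub_one {R : Type*} [NormedRing R] [NormedSpace ℝ R] {a : R}
    (ha : IsPowerBounded a) (hN : IsNilpotent (a - 1)) : a = 1 := by
  obtain ⟨k, hk⟩ := hN
  have hdescend : ∀ k : ℕ, (a - 1) ^ (k + 1) = 0 → a - 1 = 0 := fun k => by
    induction k with
    | zero => simp
    | succ k ih => exact fun h => ih (ha.sub_one_pow_succ_eq_zero h)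
  exact sub_eq_zero.1 (hdescend k (pow_eq_zero_of_le k.le_succ hk))

theorem norm_le_one_of_hasEigenvalue {𝕜 V : Type*} [NontriviallyNormedField 𝕜]
    [NormedAddCommGroup V] [NormedSpace 𝕜 V] {A : V →L[𝕜] V} (hA : IsPowerBounded A) {μ : 𝕜}
    (hμ : Module.End.HasEigenvalue (A : V →ₗ[𝕜] V) μ) : ‖μ‖ ≤ 1 := by
  obtain ⟨C, hC⟩ := hA
  obtain ⟨v, hv⟩ := hμ.exists_hasEigenvector
  by_contra! h
  obtain ⟨k, hk⟩ := pow_unbounded_of_one_lt C h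
  have hAv : (A ^ k) v = μ ^ k • v := by
    rw [← hv.pow_apply k, ← ContinuousLinearMap.toLinearMap_pow]; rfl
  have hle : ‖μ‖ ^ k * ‖v‖ ≤ C * ‖v‖ := by
    rw [← norm_pow, ← norm_smul, ← hAv]
    exact (A ^ k).le_of_opNorm_le (hC k) v
  exact hk.not_ge (le_of_mul_le_mul_right hle (norm_pos_iff.2 hv.2))

end IsPowerBounded

theorem re_trace_one_sub_eq_sum_roots_charpoly {V : Type*} [AddCommGroup V] [Module ℂ V]
    [FiniteDimensional ℂ V] (T : Module.End ℂ V) :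
    (LinearMap.trace ℂ V (1 - T)).re = (T.charpoly.roots.map fun μ => 1 - μ.re).sum := by
  have hcard : T.charpoly.roots.card = Module.finrank ℂ V := by
    rw [← (IsAlgClosed.splits T.charpoly).natDegree_eq_card_roots, LinearMap.charpoly_natDegree]
  have hsum : (T.charpoly.roots.sum).re = (T.charpoly.roots.map re).sum :=
    map_multiset_sum reAddGroupHom _
  rw [map_sub, LinearMap.trace_one,
    Module.End.trace_eq_sum_roots_charpoly_of_splits (IsAlgClosed.splits _), sub_re, hsum,
    Multiset.sum_map_sub]
  simp [hcard]

theorem isNilpotent_sub_one_of_forall_mem_roots_charpoly {𝕜 V : Type*} [Field 𝕜] [IsAlgClosed 𝕜]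
    [AddCommGroup V] [Module 𝕜 V] [FiniteDimensional 𝕜 V] {T : Module.End 𝕜 V}
    (hT : ∀ μ ∈ T.charpoly.roots, μ = 1) : IsNilpotent (T - 1) := by
  refine ⟨T.charpoly.roots.card, ?_⟩
  have hpoly : T.charpoly = (Polynomial.X - Polynomial.C 1) ^ T.charpoly.roots.card := by
    conv_lhs => rw [
      (IsAlgClosed.splits T.charpoly).eq_prod_roots_of_monic (LinearMap.charpoly_monic T),
      Multiset.eq_replicate_card.2 hT]
    simp
  have hCH := LinearMap.aeval_self_charpoly T
  rwa [hpoly, map_pow, map_sub, Polynomial.aeval_X, Polynomial.aeval_C, map_one] at hCH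

section FiniteDimensional

variable {V : Type*} [NormedAddCommGroup V] [NormedSpace ℂ V] [FiniteDimensional ℂ V]

/-- The trace as a continuous linear functional on the operators of a finite-dimensional complex
normed space. -/
def traceCLM (V : Type*) [NormedAddCommGroup V] [NormedSpace ℂ V] [FiniteDimensional ℂ V] :
    (V →L[ℂ] V) →L[ℂ] ℂ :=
  LinearMap.toContinuousLinearMap (LinearMap.trace ℂ V ∘ₗ ContinuousLinearMap.coeLM ℂ)

theorem re_traceCLM_one_sub_eq_sum_roots_charpoly (A : V →L[ℂ] V) :
    (traceCLM V (1 - A)).re =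
      ((LinearMap.charpoly (A : V →ₗ[ℂ] V)).roots.map fun μ => 1 - μ.re).sum :=
  re_trace_one_sub_eq_sum_roots_charpoly (A : V →ₗ[ℂ] V)

namespace IsPowerBounded

variable {A : V →L[ℂ] V}

theorem norm_le_one_of_mem_roots_charpoly (hA : IsPowerBounded A) {μ : ℂ}
    (hμ : μ ∈ (LinearMap.charpoly (A : V →ₗ[ℂ] V)).roots) : ‖μ‖ ≤ 1 :=
  hA.norm_le_one_of_hasEigenvalue
    ((Module.End.hasEigenvalue_iff_isRoot_charpoly _ μ).2 (Polynomial.isRoot_of_mem_roots hμ))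

theorem forall_mem_map_one_sub_re_nonneg (hA : IsPowerBounded A) :
    ∀ x ∈ (LinearMap.charpoly (A : V →ₗ[ℂ] V)).roots.map fun μ => 1 - μ.re, 0 ≤ x := by
  intro x hx
  obtain ⟨μ, hμ, rfl⟩ := Multiset.mem_map.1 hx
  exact sub_nonneg.2 ((re_le_norm μ).trans (hA.norm_le_one_of_mem_roots_charpoly hμ))

theorem re_traceCLM_one_sub_nonneg (hA : IsPowerBounded A) : 0 ≤ (traceCLM V (1 - A)).re := by
  rw [re_traceCLM_one_sub_eq_sum_roots_charpoly]
  exact Multiset.sum_nonneg hA.forall_mem_map_one_sub_re_nonneg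

theorem eq_one_of_re_traceCLM_one_sub_eq_zero (hA : IsPowerBounded A)
    (htr : (traceCLM V (1 - A)).re = 0) : A = 1 := by
  rw [re_traceCLM_one_sub_eq_sum_roots_charpoly] at htr
  have hroots : ∀ μ ∈ (LinearMap.charpoly (A : V →ₗ[ℂ] V)).roots, μ = 1 := fun μ hμ => by
    have hzero : 1 - μ.re = 0 := Multiset.all_zero_of_le_zero_le_of_sum_eq_zero
      hA.forall_mem_map_one_sub_re_nonneg htr _ (Multiset.mem_map_of_mem (fun μ => 1 - μ.re) hμ)
    have hre : μ.re = 1 := (sub_eq_zero.1 hzero).symm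
    have hnorm : μ.re = ‖μ‖ :=
      (re_le_norm μ).antisymm (hre.symm ▸ hA.norm_le_one_of_mem_roots_charpoly hμ)
    exact Complex.ext hre (Complex.nonneg_iff.1 (Complex.re_eq_norm.1 hnorm)).2.symm
  have hnil : IsNilpotent ((A : V →ₗ[ℂ] V) - 1) :=
    isNilpotent_sub_one_of_forall_mem_roots_charpoly hroots
  exact hA.eq_one_of_isNilpotent_sub_one ((IsNilpotent.map_iff
    (f := ContinuousLinearMap.toLinearMapRingHom (R₁ := ℂ) (M₁ := V))
    ContinuousLinearMap.coe_injective).1 hnil)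

end IsPowerBounded

end FiniteDimensional

end PowerBounded

section Cartan

open Asymptotics

-- Near `z₀` the map `F - id` has arbitrarily small Lipschitz constant, so `F` displaces the point
-- `F^[k] x` by almost the same vector `F x - x` as it displaces `x`.
theorem isLittleO_iterate_sub_self_sub_nsmul {𝕜 E G : Type*} [NontriviallyNormedField 𝕜]
    [NormedAddCommGroup E] [NormedSpace 𝕜 E] [NormedAddCommGroup G] {F : E → E} {z₀ : E} {g : E → G}
    (hF : HasStrictFDerivAt F (1 : E →L[𝕜] E) z₀) (hfix : F z₀ = z₀)
    (hg : (fun x => F x - x) =O[𝓝 z₀] g) (k : ℕ) :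
    (fun x => F^[k] x - x - k • (F x - x)) =o[𝓝 z₀] g := by
  induction k with
  | zero => simp
  | succ k ih =>
    have hk : Tendsto F^[k] (𝓝 z₀) (𝓝 z₀) := by
      have := (hF.continuousAt.iterate hfix k).tendsto
      rwa [iterate_fixed hfix] at this
    have hkg : (fun x => F^[k] x - x) =O[𝓝 z₀] g :=
      (ih.isBigO.add (hg.const_smul_left (k : 𝕜))).congr_left fun x => by
        rw [Pi.smul_apply, Nat.cast_smul_eq_nsmul, sub_add_cancel]
    have hstep : (fun x => F (F^[k] x) - F x - (F^[k] x - x)) =o[𝓝 z₀] g :=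
      (hF.isLittleO.comp_tendsto (hk.prodMk_nhds tendsto_id)).trans_isBigO hkg
    refine (ih.add hstep).congr_left fun x => ?_
    rw [iterate_succ_apply', succ_nsmul]
    abel

variable {E : Type*} [NormedAddCommGroup E] [NormedSpace ℂ E]

theorem norm_le_mul_div_pow_of_isLittleO {E' : Type*} [NormedAddCommGroup E'] [NormedSpace ℂ E']
    {h : E → E'} {z₀ x : E} {r M : ℝ} {m : ℕ} (hd : DifferentiableOn ℂ h (ball z₀ r))
    (hM : ∀ y ∈ ball z₀ r, ‖h y‖ ≤ M) (h₀ : h z₀ = 0)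
    (ho : h =o[𝓝 z₀] fun y => ‖y - z₀‖ ^ m) (hx : x ∈ ball z₀ r) :
    ‖h x‖ ≤ M / r ^ (m + 1) * ‖x - z₀‖ ^ (m + 1) := by
  have := dist_le_mul_div_pow_of_mapsTo_ball_of_isLittleO (n := m) hd
    (fun y hy => by simpa [h₀] using hM y hy) (by simpa [h₀] using ho) hx
  rw [h₀, dist_zero_right, dist_eq_norm_sub, div_pow] at this
  exact this.trans_eq (by ring)

variable {F : E → E} {Ω : Set E} {z₀ : E}

theorem isPowerBounded_fderiv (hΩ : IsOpen Ω) (hbd : Bornology.IsBounded Ω)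
    (hF : DifferentiableOn ℂ F Ω) (hmaps : MapsTo F Ω Ω) (hz₀ : z₀ ∈ Ω) (hfix : F z₀ = z₀) :
    IsPowerBounded (fderiv ℂ F z₀) := by
  obtain ⟨M, hM⟩ := hbd.exists_norm_le
  obtain ⟨r, hr, hrΩ⟩ := isOpen_iff.1 hΩ z₀ hz₀
  refine ⟨2 * M / r, fun k => ?_⟩
  have hder := (hF.differentiableAt (hΩ.mem_nhds hz₀)).hasFDerivAt.iterate hfix k
  rw [← hder.fderiv]
  exact norm_fderiv_le_of_forall_mem_ball_norm_le ((hF.iterate hmaps k).mono hrΩ)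
    (fun x hx => hM _ (hmaps.iterate k (hrΩ hx))) hr

theorem exists_norm_iterate_sub_self_le (hbd : Bornology.IsBounded Ω)
    (hF : DifferentiableOn ℂ F Ω) (hmaps : MapsTo F Ω Ω) {r : ℝ}
    (hrΩ : ball z₀ r ⊆ Ω) (hfix : F z₀ = z₀) (hder : HasStrictFDerivAt F (1 : E →L[ℂ] E) z₀) :
    ∃ M, ∀ m, ((fun x => F x - x) =o[𝓝 z₀] fun x => ‖x - z₀‖ ^ m) → ∀ k, ∀ x ∈ ball z₀ r,
      ‖F^[k] x - x‖ ≤ M / r ^ (m + 1) * ‖x - z₀‖ ^ (m + 1) := by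
  obtain ⟨M, hM⟩ := hbd.exists_norm_le
  refine ⟨2 * M, fun m ho k x hx => ?_⟩
  have hok : (fun x => F^[k] x - x) =o[𝓝 z₀] fun x => ‖x - z₀‖ ^ m :=
    ((isLittleO_iterate_sub_self_sub_nsmul hder hfix ho.isBigO k).add
      (ho.const_smul_left (k : ℂ))).congr_left fun x => by
        rw [Pi.smul_apply, Nat.cast_smul_eq_nsmul, sub_add_cancel]
  refine norm_le_mul_div_pow_of_isLittleO (h := fun y => F^[k] y - y)
    (((hF.iterate hmaps k).mono hrΩ).sub differentiableOn_id) (fun y hy => ?_)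
    (by rw [iterate_fixed hfix, sub_self]) hok hx
  linarith [norm_sub_le (F^[k] y) y, hM _ (hmaps.iterate k (hrΩ hy)), hM _ (hrΩ hy)]

-- If `F x - x` vanishes to order `m`, then `k • (F x - x) ≈ F^[k] x - x` is bounded by
-- `‖x - z₀‖ ^ (m + 1)` up to a constant not depending on `k`.
theorem isLittleO_sub_self_pow_succ (hΩ : IsOpen Ω) (hbd : Bornology.IsBounded Ω)
    (hF : DifferentiableOn ℂ F Ω) (hmaps : MapsTo F Ω Ω) (hz₀ : z₀ ∈ Ω) (hfix : F z₀ = z₀)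
    (hder : HasStrictFDerivAt F (1 : E →L[ℂ] E) z₀) (m : ℕ)
    (ho : (fun x => F x - x) =o[𝓝 z₀] fun x => ‖x - z₀‖ ^ m) :
    (fun x => F x - x) =o[𝓝 z₀] fun x => ‖x - z₀‖ ^ (m + 1) := by
  obtain ⟨r, hr, hrΩ⟩ := isOpen_iff.1 hΩ z₀ hz₀
  obtain ⟨M, hM⟩ := exists_norm_iterate_sub_self_le hbd hF hmaps hrΩ hfix hder
  set B := M / r ^ (m + 1)
  have hO : (fun x => F x - x) =O[𝓝 z₀] fun x => ‖x - z₀‖ ^ (m + 1) :=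
    .of_bound B <| by
      filter_upwards [ball_mem_nhds z₀ hr] with x hx
      simpa using hM m ho 1 x hx
  have hiter := isLittleO_iterate_sub_self_sub_nsmul hder hfix hO
  refine (isLittleO_iff_nat_mul_le.2 fun k => ?_ :
    _ =o[𝓝 z₀] fun x => (|B| + 1) * ‖x - z₀‖ ^ (m + 1)).of_const_mul_right
  filter_upwards [ball_mem_nhds z₀ hr, (hiter k).def one_pos] with x hx hxk
  calc k * ‖F x - x‖ = ‖F^[k] x - x - (F^[k] x - x - k • (F x - x))‖ := by
        rw [sub_sub_cancel, RCLike.norm_nsmul ℂ, nsmul_eq_mul]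
    _ ≤ B * ‖x - z₀‖ ^ (m + 1) + 1 * ‖‖x - z₀‖ ^ (m + 1)‖ :=
        (norm_sub_le _ _).trans (add_le_add (hM m ho k x hx) hxk)
    _ ≤ ‖(|B| + 1) * ‖x - z₀‖ ^ (m + 1)‖ := by
        rw [norm_mul, Real.norm_of_nonneg (by positivity : 0 ≤ |B| + 1), add_mul,
          Real.norm_of_nonneg (by positivity : 0 ≤ ‖x - z₀‖ ^ (m + 1))]
        gcongr
        exact le_abs_self B

theorem eqOn_id_ball_of_hasStrictFDerivAt_one (hΩ : IsOpen Ω) (hbd : Bornology.IsBounded Ω)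
    (hF : DifferentiableOn ℂ F Ω) (hmaps : MapsTo F Ω Ω) {r : ℝ} (hrΩ : ball z₀ r ⊆ Ω)
    (hfix : F z₀ = z₀) (hder : HasStrictFDerivAt F (1 : E →L[ℂ] E) z₀) :
    EqOn F id (ball z₀ r) := by
  intro x hx
  have hr : 0 < r := dist_nonneg.trans_lt hx
  have hz₀ : z₀ ∈ Ω := hrΩ (mem_ball_self hr)
  obtain ⟨M, hM⟩ := exists_norm_iterate_sub_self_le hbd hF hmaps hrΩ hfix hder
  have hflat : ∀ m : ℕ, (fun x => F x - x) =o[𝓝 z₀] fun x => ‖x - z₀‖ ^ m := fun m => by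
    induction m with
    | zero =>
      simpa [hfix] using (hder.continuousAt.fun_sub (continuousAt_id' z₀)).tendsto
    | succ m ih => exact isLittleO_sub_self_pow_succ hΩ hbd hF hmaps hz₀ hfix hder m ih
  have hlim : Tendsto (fun m : ℕ => M * (dist x z₀ / r) ^ (m + 1)) atTop (𝓝 0) := by
    simpa using ((tendsto_pow_atTop_nhds_zero_of_lt_one (by positivity)
      ((div_lt_one hr).2 hx)).comp (tendsto_add_atTop_nat 1)).const_mul M
  refine sub_eq_zero.1 (norm_le_zero_iff.1 (ge_of_tendsto' hlim fun m => ?_))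
  refine (hM m (hflat m) 1 x hx).trans_eq ?_
  rw [dist_eq_norm_sub, div_pow]
  ring

/-- **Cartan's uniqueness theorem**. -/
theorem eqOn_id_of_fderiv_eq_one (hΩ : IsOpen Ω) (hconn : IsPreconnected Ω)
    (hbd : Bornology.IsBounded Ω) (hF : DifferentiableOn ℂ F Ω) (hmaps : MapsTo F Ω Ω)
    (hz₀ : z₀ ∈ Ω) (hfix : F z₀ = z₀) (hder : fderiv ℂ F z₀ = 1) : EqOn F id Ω := by
  have heq : ∀ z r, ball z r ⊆ Ω → F z = z → fderiv ℂ F z = 1 → EqOn F id (ball z r) :=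
    fun z r hr hz hdz => by
      rcases le_or_gt r 0 with hr0 | hr0
      · simp [ball_eq_empty.2 hr0]
      · exact eqOn_id_ball_of_hasStrictFDerivAt_one hΩ hbd hF hmaps hr hz
          (hdz ▸ hasStrictFDerivAt_fderiv_of_differentiableOn hΩ hF (hr (mem_ball_self hr0)))
  have hsub : Ω ⊆ {z | F =ᶠ[𝓝 z] id} := by
    refine hconn.subset_of_closure_inter_subset isOpen_setOfPred_eventually_nhds ?_ ?_
    · obtain ⟨r, hr, hrΩ⟩ := isOpen_iff.1 hΩ z₀ hz₀
      exact ⟨z₀, hz₀, (heq z₀ r hrΩ hfix hder).eventuallyEq_of_mem (ball_mem_nhds z₀ hr)⟩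
    · rintro z ⟨hz, hzΩ⟩
      obtain ⟨r, hr, hrΩ⟩ := isOpen_iff.1 hΩ z hzΩ
      obtain ⟨y, hy : F =ᶠ[𝓝 y] id, hyz⟩ := mem_closure_iff.1 hz (r / 2) (half_pos hr)
      have hyΩ : ball y (r / 2) ⊆ Ω :=
        (ball_subset_ball' (by rw [dist_comm] at hyz; linarith)).trans hrΩ
      exact (heq y (r / 2) hyΩ hy.eq_of_nhds (hy.fderiv_eq.trans fderiv_id)).eventuallyEq_of_mem
        (isOpen_ball.mem_nhds hyz)
  exact fun z hz => (hsub hz).eq_of_nhds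

end Cartan

section Boundary

open Asymptotics

theorem LittleOh.isLittleO {n : ℕ} {Ω : Set (En n)} {F : En n → En n} {p : En n} {k : ℕ}
    (ho : LittleOh Ω F p k) (hp : p ∉ Ω) :
    (fun z => F z - z) =o[𝓝[Ω] p] fun z => ‖z - p‖ ^ k := by
  refine (isLittleO_norm_left (f' := fun z => F z - z)).1 ((isLittleO_iff_tendsto' ?_).2 ho)
  filter_upwards [self_mem_nhdsWithin] with z hz hzp
  have hne : z ≠ p := fun h => hp (h ▸ hz)
  exact absurd hzp (pow_ne_zero _ (norm_ne_zero_iff.2 (sub_ne_zero.2 hne)))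

theorem dist_le_mul_of_lipschitzOnWith_of_tendsto {X Y : Type*} [PseudoMetricSpace X]
    [PseudoMetricSpace Y] {f : X → Y} {s : Set X} {K : NNReal} {a x : X} {b : Y}
    (hf : LipschitzOnWith K f s) (ha : a ∈ closure s) (hb : Tendsto f (𝓝[s] a) (𝓝 b))
    (hx : x ∈ s) : dist (f x) b ≤ K * dist x a := by
  have : (𝓝[s] a).NeBot := mem_closure_iff_nhdsWithin_neBot.1 ha
  have hdist : Tendsto (fun y => K * dist x y) (𝓝[s] a) (𝓝 (K * dist x a)) :=
    (Continuous.tendsto (by fun_prop) a).mono_left nhdsWithin_le_nhds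
  refine le_of_tendsto_of_tendsto (tendsto_const_nhds.dist hb) hdist ?_
  filter_upwards [self_mem_nhdsWithin] with y hy using hf.dist_le_mul x hx y hy

theorem tendsto_ofReal_nhdsWithin_ball_one :
    Tendsto (fun r : ℝ => (r : ℂ)) (𝓝[<] 1) (𝓝[ball 0 1] 1) := by
  refine tendsto_nhdsWithin_iff.2 ⟨(continuous_ofReal.tendsto' 1 1 ofReal_one).mono_left
    nhdsWithin_le_nhds, ?_⟩
  filter_upwards [Ioo_mem_nhdsLT (neg_lt_self one_pos)] with r hr
  rwa [mem_ball_zero_iff, Complex.norm_real, Real.norm_eq_abs, abs_lt]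

theorem isBigO_sub_of_lipschitzOnWith_of_tendsto {E : Type*} [NormedAddCommGroup E] {φ : ℂ → E}
    {p : E} {δ : ℝ} {K : NNReal} (hδ : 0 < δ) (hφ : LipschitzOnWith K φ (ball 0 1 ∩ ball 1 δ))
    (hφp : Tendsto φ (𝓝[ball 0 1] 1) (𝓝 p)) :
    (fun r : ℝ => φ r - p) =O[𝓝[<] 1] fun r => 1 - r := by
  have hnhds : 𝓝[ball 0 1 ∩ ball 1 δ] (1 : ℂ) = 𝓝[ball 0 1] 1 :=
    nhdsWithin_inter_of_mem' (mem_nhdsWithin_of_mem_nhds (ball_mem_nhds 1 hδ))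
  have h1 : (1 : ℂ) ∈ closure (ball 0 1 ∩ ball 1 δ) := by
    rw [mem_closure_iff_nhdsWithin_neBot, hnhds, ← mem_closure_iff_nhdsWithin_neBot,
      closure_ball 0 one_ne_zero]
    simp
  have hmem := tendsto_ofReal_nhdsWithin_ball_one.eventually (hnhds ▸ self_mem_nhdsWithin)
  refine .of_bound K ?_
  filter_upwards [hmem] with r hr
  rw [← dist_eq_norm_sub]
  refine (dist_le_mul_of_lipschitzOnWith_of_tendsto hφ h1 (hnhds ▸ hφp) hr).trans_eq ?_
  rw [dist_comm, dist_eq_norm_sub, ← ofReal_one, ← ofReal_sub, Complex.norm_real]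

-- `-ρ` is a lower bound, up to the Lipschitz constant, for the distance to the complement of `Ω`.
theorem exists_eventually_ball_subset_of_lipschitzOnWith {X ι : Type*} [PseudoMetricSpace X]
    {Ω W : Set X} {p : X} {ρ : X → ℝ} {L : NNReal} {l : Filter ι} {γ : ι → X} {t : ι → ℝ} {c : ℝ}
    (hW : W ∈ 𝓝 p) (hρ : LipschitzOnWith L ρ W) (hΩ : ∀ z ∈ W, ρ z < 0 → z ∈ Ω)
    (hγ : Tendsto γ l (𝓝 p)) (hc : 0 < c) (htpos : ∀ᶠ x in l, 0 < t x) (ht : Tendsto t l (𝓝 0))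
    (hle : ∀ᶠ x in l, ρ (γ x) ≤ -(c * t x)) :
    ∃ κ > 0, ∀ᶠ x in l, ball (γ x) (κ * t x) ⊆ Ω := by
  obtain ⟨ε, hε, hεW⟩ := Metric.mem_nhds_iff.1 hW
  have hsmall : ∀ᶠ x in l, c / (L + 1) * t x < ε / 2 :=
    (ht.const_mul (c / (L + 1))).eventually (gt_mem_nhds (by simpa using hε))
  refine ⟨c / (L + 1), by positivity, ?_⟩
  filter_upwards [hγ (ball_mem_nhds p (half_pos hε)), htpos, hsmall, hle] with x hx htx hxε hρx z hz
  have hxp : dist (γ x) p < ε / 2 := hx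
  have hzx : dist z (γ x) < c / (L + 1) * t x := hz
  have hzW : z ∈ W := hεW (mem_ball.2 (by linarith [dist_triangle z (γ x) p]))
  have hxW : γ x ∈ W := hεW (mem_ball.2 (by linarith))
  refine hΩ z hzW ?_
  calc ρ z ≤ ρ (γ x) + L * dist z (γ x) :=
        sub_le_iff_le_add'.1 ((le_abs_self _).trans (hρ.dist_le_mul z hzW _ hxW))
    _ ≤ -(c * t x) + L * (c / (L + 1) * t x) := by gcongr
    _ = -(c / (L + 1) * t x) := by field_simp; ring
    _ < 0 := neg_lt_zero.2 (by positivity)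

theorem exists_ball_subset_ball_one_inter_of_mem_nhdsWithin {V : Set ℂ}
    (hV : V ∈ 𝓝[ball 0 1] (1 : ℂ)) :
    ∃ s : ℝ, 0 < s ∧ ball ((1 - s : ℝ) : ℂ) s ⊆ ball 0 1 ∩ V := by
  obtain ⟨τ, hτ, hτV⟩ := mem_nhdsWithin_iff.1 hV
  obtain ⟨s, hs, hs1, hsτ⟩ : ∃ s : ℝ, 0 < s ∧ s ≤ 1 ∧ 2 * s ≤ τ :=
    ⟨min 1 (τ / 2), by positivity, min_le_left _ _, by linarith [min_le_right 1 (τ / 2)]⟩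
  have hnorm : ‖((1 - s : ℝ) : ℂ)‖ = 1 - s := by
    rw [Complex.norm_real, Real.norm_of_nonneg (by linarith)]
  have hdist : dist ((1 - s : ℝ) : ℂ) 1 = s := by
    rw [dist_eq_norm_sub, ← ofReal_one, ← ofReal_sub, Complex.norm_real, Real.norm_eq_abs]
    simp [abs_of_pos hs]
  have hball : ball ((1 - s : ℝ) : ℂ) s ⊆ ball 0 1 :=
    ball_subset_ball' (by rw [dist_zero_right, hnorm]; linarith)
  exact ⟨s, hs, subset_inter hball fun ζ hζ =>
    hτV ⟨ball_subset_ball' (by rw [hdist]; linarith) hζ, hball hζ⟩⟩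

-- Hopf's lemma is applied on a small disk inside the unit disk, tangent to its boundary at `1`.
theorem exists_eventually_comp_le_neg_mul {X : Type*} {φ : ℂ → X} {Ω U : Set X} {ρ : X → ℝ}
    (hφΩ : MapsTo φ (ball 0 1) Ω) (hU : φ ⁻¹' U ∈ 𝓝[ball 0 1] (1 : ℂ))
    (hneg : ∀ z ∈ Ω ∩ U, ρ z < 0) (hsub : IsSubharmonicOn (ρ ∘ φ) (ball 0 1 ∩ φ ⁻¹' U)) :
    ∃ c > 0, ∀ᶠ r : ℝ in 𝓝[<] 1, ρ (φ r) ≤ -(c * (1 - r)) := by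
  obtain ⟨s, hs, hsU⟩ := exists_ball_subset_ball_one_inter_of_mem_nhdsWithin hU
  have hlt : ∀ ζ ∈ ball ((1 - s : ℝ) : ℂ) s, ρ (φ ζ) < 0 := fun ζ hζ =>
    hneg _ ⟨hφΩ (hsU hζ).1, (hsU hζ).2⟩
  exact (hsub.mono hsU).exists_eventually_le_neg_mul hs (fun ζ hζ => (hlt ζ hζ).le)
    (hlt _ (mem_ball_self hs))

end Boundary

section Rigidity

open Asymptotics

variable {E : Type*} [NormedAddCommGroup E] [NormedSpace ℂ E] [FiniteDimensional ℂ E]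

-- By power-boundedness `-Re tr (1 - F'(φ ζ))` is a nonpositive harmonic function of `ζ`, and it
-- vanishes too fast at `1` to be negative anywhere.
theorem fderiv_eq_one_of_isLittleO {Ω : Set E} {F : E → E} {φ : ℂ → E} (hΩ : IsOpen Ω)
    (hbd : Bornology.IsBounded Ω) (hF : DifferentiableOn ℂ F Ω) (hmaps : MapsTo F Ω Ω)
    (hφ : DifferentiableOn ℂ φ (ball 0 1)) (hφΩ : MapsTo φ (ball 0 1) Ω)
    (hfix : ∀ ζ ∈ ball (0 : ℂ) 1, F (φ ζ) = φ ζ)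
    (ho : (fun r : ℝ => fderiv ℂ F (φ r) - 1) =o[𝓝[<] 1] fun r => 1 - r) :
    fderiv ℂ F (φ 0) = 1 := by
  have hpow : ∀ ζ ∈ ball (0 : ℂ) 1, IsPowerBounded (fderiv ℂ F (φ ζ)) := fun ζ hζ =>
    isPowerBounded_fderiv hΩ hbd hF hmaps (hφΩ hζ) (hfix ζ hζ)
  set g : ℂ → ℂ := fun ζ => traceCLM E (fderiv ℂ F (φ ζ) - 1)
  have hg : DifferentiableOn ℂ g (ball 0 1) := (traceCLM E).differentiable.comp_differentiableOn
    ((differentiableOn_fderiv_comp hΩ hF isOpen_ball hφ hφΩ).sub_const 1)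
  have hgneg : ∀ ζ, (g ζ).re = -(traceCLM E (1 - fderiv ℂ F (φ ζ))).re := fun ζ => by
    rw [← neg_re, ← map_neg, neg_sub]
  have hsub : IsSubharmonicOn (fun ζ => (g ζ).re) (ball 0 1) := .of_harmonicOnNhd fun ζ hζ =>
    (hg.analyticAt (isOpen_ball.mem_nhds hζ)).harmonicAt_re
  have hle : ∀ ζ ∈ ball (0 : ℂ) 1, (g ζ).re ≤ 0 := fun ζ hζ => by
    rw [hgneg]
    exact neg_nonpos.2 (hpow ζ hζ).re_traceCLM_one_sub_nonneg
  have hgo : (fun r : ℝ => (g r).re) =o[𝓝[<] 1] fun r => 1 - r :=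
    ((reCLM.comp ((traceCLM E).restrictScalars ℝ)).isBigO_comp _ _).trans_isLittleO ho
  have h0 := hsub.eq_zero_of_isLittleO hle hgo
  rw [hgneg, neg_eq_zero] at h0
  exact (hpow 0 (mem_ball_self one_pos)).eq_one_of_re_traceCLM_one_sub_eq_zero h0

theorem huang_rigidity_along_analytic_disc_general {Ω U W : Set E} {F : E → E} {φ : ℂ → E} {p : E}
    {ρ : E → ℝ} {L : NNReal} (hΩ : IsOpen Ω) (hconn : IsPreconnected Ω)
    (hbd : Bornology.IsBounded Ω) (hφ : DifferentiableOn ℂ φ (ball 0 1))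
    (hφΩ : MapsTo φ (ball 0 1) Ω) (hφp : Tendsto φ (𝓝[ball 0 1] 1) (𝓝 p))
    (hφO : (fun r : ℝ => φ r - p) =O[𝓝[<] 1] fun r => 1 - r) (hU : U ∈ 𝓝 p) (hW : W ∈ 𝓝 p)
    (hρ : LipschitzOnWith L ρ W) (hρΩ : Ω ∩ U = {z ∈ U | ρ z < 0})
    (hsub : IsSubharmonicOn (ρ ∘ φ) (ball 0 1 ∩ φ ⁻¹' U)) (hF : DifferentiableOn ℂ F Ω)
    (hmaps : MapsTo F Ω Ω) (hfix : ∀ ζ ∈ ball (0 : ℂ) 1, F (φ ζ) = φ ζ)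
    (ho : (fun z => F z - z) =o[𝓝[Ω] p] fun z => ‖z - p‖ ^ 2) : ∀ z ∈ Ω, F z = z := by
  have ht : Tendsto (fun r : ℝ => 1 - r) (𝓝[<] 1) (𝓝 0) :=
    (Continuous.tendsto' (by fun_prop) 1 0 (sub_self 1)).mono_left nhdsWithin_le_nhds
  have htpos : ∀ᶠ r : ℝ in 𝓝[<] 1, 0 < 1 - r := by
    filter_upwards [self_mem_nhdsWithin] with r hr using sub_pos.2 hr
  obtain ⟨c, hc, hρc⟩ := exists_eventually_comp_le_neg_mul hφΩ (hφp hU)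
    (fun z hz => (hρΩ.subset hz).2) hsub
  obtain ⟨κ, hκ, hball⟩ := exists_eventually_ball_subset_of_lipschitzOnWith (inter_mem hU hW)
    (hρ.mono inter_subset_right) (fun z hz hρz => (hρΩ.superset ⟨hz.1, hρz⟩).1)
    (hφp.comp tendsto_ofReal_nhdsWithin_ball_one) hc htpos ht hρc
  have hder : (fun r : ℝ => fderiv ℂ F (φ r) - 1) =o[𝓝[<] 1] fun r => 1 - r := by
    have h :=
      isLittleO_fderiv_of_isLittleO_pow (hF.sub differentiableOn_id) ho hκ htpos ht hball hφO
    simp only [pow_one] at h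
    refine h.congr' ?_ .rfl
    filter_upwards [tendsto_ofReal_nhdsWithin_ball_one.eventually self_mem_nhdsWithin] with r hr
    have hFr : DifferentiableAt ℂ F (φ r) := hF.differentiableAt (hΩ.mem_nhds (hφΩ hr))
    exact (hFr.hasFDerivAt.sub (hasFDerivAt_id (φ r))).fderiv
  have h0 : (0 : ℂ) ∈ ball (0 : ℂ) 1 := mem_ball_self one_pos
  exact eqOn_id_of_fderiv_eq_one hΩ hconn hbd hF hmaps (hφΩ h0) (hfix 0 h0)
    (fderiv_eq_one_of_isLittleO hΩ hbd hF hmaps hφ hφΩ hfix hder)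

end Rigidity

theorem huang_rigidity_along_analytic_disc
    {n : ℕ} (hn : 2 ≤ n) (Ω : Set (En n))
    (hΩ : IsDomain' Ω) (hbd : Bornology.IsBounded Ω)
    (φ : ℂ → En n) (p : En n) (hp : p ∈ frontier Ω)
    (hφhol : DifferentiableOn ℂ φ (Metric.ball (0 : ℂ) 1))
    (hφmaps : MapsTo φ (Metric.ball (0 : ℂ) 1) Ω)
    (hφproper : ∀ K ⊆ Ω, IsCompact K →
      IsCompact {ζ ∈ Metric.ball (0 : ℂ) 1 | φ ζ ∈ K})
    (δ : ℝ) (hδ : 0 < δ) (c : NNReal)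
    (hφlip : LipschitzOnWith c φ (Metric.ball (0 : ℂ) 1 ∩ Metric.ball (1 : ℂ) δ))
    (hφ1 : φ 1 = p)
    (hφcont : Tendsto φ (𝓝[Metric.ball (0 : ℂ) 1] 1) (𝓝 p))
    (U : Set (En n)) (hU : U ∈ 𝓝 p) (hUopen : IsOpen U)
    (ρ : En n → ℝ) (hρC1 : ContDiffOn ℝ 1 ρ U)
    (hρd : ∀ z ∈ U, fderiv ℝ ρ z ≠ 0)
    (hρneg : Ω ∩ U = {z ∈ U | ρ z < 0})
    (hρzero : frontier Ω ∩ U = {z ∈ U | ρ z = 0})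
    (hsub : ∀ a : ℂ, ∀ r : ℝ, 0 < r →
      Metric.closedBall a r ⊆ Metric.ball (0 : ℂ) 1 ∩ φ ⁻¹' U →
      ρ (φ a) ≤ (1 / (2 * Real.pi)) *
        ∫ θ in (0 : ℝ)..(2 * Real.pi), ρ (φ (a + r * Complex.exp (θ * I))))
    (F : En n → En n) (hF : DifferentiableOn ℂ F Ω) (hFself : MapsTo F Ω Ω)
    (hfix : ∀ ζ ∈ Metric.ball (0 : ℂ) 1, F (φ ζ) = φ ζ)
    (ho : LittleOh Ω F p 2) :
    ∀ z ∈ Ω, F z = z := by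
  have hpΩ : p ∉ Ω := fun h => hp.2 (hΩ.1.interior_eq.symm ▸ h)
  obtain ⟨L, W, hW, hρL⟩ := (hρC1.contDiffAt hU).exists_lipschitzOnWith
  have hρφ : IsSubharmonicOn (ρ ∘ φ) (ball 0 1 ∩ φ ⁻¹' U) :=
    { continuousOn := hρC1.continuousOn.comp (hφhol.continuousOn.mono inter_subset_left)
        fun _ hζ => hζ.2
      le_circleAverage := fun a r hr h => by
        simpa [Real.circleAverage, circleMap] using hsub a r hr h }
  exact huang_rigidity_along_analytic_disc_general hΩ.1 hΩ.2.isPreconnected hbd hφhol hφmaps hφcont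
    (isBigO_sub_of_lipschitzOnWith_of_tendsto hδ hφlip hφcont) hU hW hρL hρneg hρφ hF hFself hfix
    (ho.isLittleO hpΩ)
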